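/- Let B : ℝ² → ℝ be smooth and compactly supported, and suppose the total flux Φ_B := (1/(2π)) ∫_{ℝ²} B(x) dx is an integer. Let A : ℝ² → ℝ² be the Poincaré-gauge potential A(x) := (−x_2, x_1) ∫_0^1 B(u x) u du, for s ≥ 0 set A_s(y) := e^{s/2} A(e^{s/2} y), and let λ_B(s) be the infimum over nonzero ψ ∈ C_c^∞(ℝ², ℂ) of ( ∫_{ℝ²} |∇ψ(y) − iA_s(y)ψ(y)|² dy + (1/16) ∫_{ℝ²} |y|² |ψ(y)|² dy ) / ∫_{ℝ²} |ψ|² dy. Then λ_B(s) → 1/2 as s → ∞. -/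

import Mathlib

open MeasureTheory Real Filter

/-- The two-dimensional Poincaré-gauge potential `A(x) := (−x₂, x₁) ∫_0^1 B(ux) u du`. -/
noncomputable def poincareGauge2 (B : EuclideanSpace ℝ (Fin 2) → ℝ)
    (x : EuclideanSpace ℝ (Fin 2)) (j : Fin 2) : ℝ :=
  (![-x 1, x 0] j) * ∫ u in (0:ℝ)..1, B (u • x) * u

/-- The quadratic form `l_s[ψ]` of the operator `(−i∇ − A_s)² + |y|²/16` in the plane,
with the singularly scaled potential `A_s(y) := e^{s/2} A(e^{s/2} y)`. -/
noncomputable def lsForm2 (A : EuclideanSpace ℝ (Fin 2) → Fin 2 → ℝ) (s : ℝ)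
    (ψ : EuclideanSpace ℝ (Fin 2) → ℂ) : ℝ :=
  (∫ y, ∑ j, ‖fderiv ℝ ψ y (EuclideanSpace.single j (1:ℝ))
      - Complex.I * (Real.exp (s/2) * A (Real.exp (s/2) • y) j : ℝ) * ψ y‖ ^ 2)
  + (1/16 : ℝ) * ∫ y, ‖y‖^2 * ‖ψ y‖^2

/-- The lowest eigenvalue `λ_B(s)` of the singularly scaled operator `L_s`,
as the infimum of the Rayleigh quotient. -/
noncomputable def lambdaB2 (A : EuclideanSpace ℝ (Fin 2) → Fin 2 → ℝ) (s : ℝ) : ℝ :=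
  sInf {q : ℝ | ∃ ψ : EuclideanSpace ℝ (Fin 2) → ℂ,
    ContDiff ℝ (⊤ : ℕ∞) ψ ∧ HasCompactSupport ψ ∧ ψ ≠ 0 ∧
    q = lsForm2 A s ψ / ∫ y, ‖ψ y‖^2}

/-!
Completing the square shows that the form of `L_s` is `1/2 ∫ |ψ|²` plus
`∑ⱼ ∫ |(∂ⱼ - i A_{s,j} + yⱼ/4) ψ|²`, so that `λ_B(s) ≥ 1/2`. Outside a disc containing the support
of the field the Poincaré-gauge potential is purely angular and homogeneous of degree `-1`, hence
unchanged by the scaling; since the total flux is an integer, it is there the gradient of a phase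
that is single valued on the punctured plane. Because points have zero capacity in dimension two,
the Gaussian ground state can be cut off near the origin at arbitrarily small cost, and this cut-off
Gaussian times the phase is, for large `s`, supported where the potential is gauged away. Its
Rayleigh quotient is therefore close to `1/2`.
-/

open scoped ContDiff Topology

local notation "ℝ²" => EuclideanSpace ℝ (Fin 2)

section CovariantDerivative

/-- The covariant derivative `∂_v ψ - i a ψ` of `ψ` in the direction `v`, where `a` is the
component of the magnetic potential in that direction. -/
noncomputable def covDeriv {E : Type*} [NormedAddCommGroup E] [NormedSpace ℝ E]
    (a : E → ℝ) (v : E) (ψ : E → ℂ) (y : E) : ℂ :=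
  fderiv ℝ ψ y v - Complex.I * a y * ψ y

variable {E : Type*} [NormedAddCommGroup E] [NormedSpace ℝ E] {a : E → ℝ} {v : E} {ψ : E → ℂ}

theorem covDeriv_smul (a : E → ℝ) (v : E) {f : E → ℝ} {y : E} (hf : DifferentiableAt ℝ f y)
    (hψ : DifferentiableAt ℝ ψ y) :
    covDeriv a v (fun x => f x • ψ x) y = f y • covDeriv a v ψ y + fderiv ℝ f y v • ψ y := by
  rw [covDeriv, fderiv_fun_smul hf hψ]
  simp only [covDeriv, add_apply, smul_apply, ContinuousLinearMap.smulRight_apply,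
    Complex.real_smul]
  ring

theorem continuous_covDeriv (hψ : ContDiff ℝ 1 ψ) (ha : Continuous a) :
    Continuous (covDeriv a v ψ) := by
  have hderiv : Continuous fun y => fderiv ℝ ψ y v :=
    (hψ.continuous_fderiv one_ne_zero).clm_apply continuous_const
  exact hderiv.sub ((continuous_const.mul (Complex.continuous_ofReal.comp ha)).mul hψ.continuous)

theorem hasCompactSupport_covDeriv (hc : HasCompactSupport ψ) :
    HasCompactSupport (covDeriv a v ψ) :=
  (hc.fderiv_apply ℝ v).sub hc.mul_left

theorem real_inner_I_mul_real_mul_self (c : ℝ) (z : ℂ) : inner ℝ z (Complex.I * c * z) = 0 := by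
  simp only [Complex.inner, Complex.mul_re, Complex.conj_re, Complex.conj_im,
    Complex.I_re, Complex.I_im, Complex.ofReal_re, Complex.ofReal_im, Complex.mul_im]
  ring

theorem norm_covDeriv_add_smul_sq (a : E → ℝ) (v : E) (ψ : E → ℂ) (y : E) (c : ℝ) :
    ‖covDeriv a v ψ y + c • ψ y‖ ^ 2 =
      ‖covDeriv a v ψ y‖ ^ 2 + c * (2 * inner ℝ (ψ y) (fderiv ℝ ψ y v)) + c ^ 2 * ‖ψ y‖ ^ 2 := by
  have hcross : inner ℝ (covDeriv a v ψ y) (ψ y) = inner ℝ (ψ y) (fderiv ℝ ψ y v) := by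
    rw [real_inner_comm, covDeriv, inner_sub_right, real_inner_I_mul_real_mul_self, sub_zero]
  rw [norm_add_sq_real, norm_smul, mul_pow, Real.norm_eq_abs, sq_abs, real_inner_smul_right,
    hcross]
  ring

variable [MeasurableSpace E] [BorelSpace E]

theorem integrable_norm_sq_of_hasCompactSupport {X V : Type*} [TopologicalSpace X]
    [MeasurableSpace X] [OpensMeasurableSpace X] [NormedAddCommGroup V]
    {μ : Measure X} [IsFiniteMeasureOnCompacts μ] {f : X → V}
    (hf : Continuous f) (hc : HasCompactSupport f) : Integrable (fun x => ‖f x‖ ^ 2) μ :=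
  Continuous.integrable_of_hasCompactSupport (by fun_prop)
    (hc.comp_left (g := fun z : V => ‖z‖ ^ 2) (by simp))

theorem integral_norm_sq_pos {X V : Type*} [TopologicalSpace X] [MeasurableSpace X]
    [OpensMeasurableSpace X] [NormedAddCommGroup V] {μ : Measure X} [IsFiniteMeasureOnCompacts μ]
    [μ.IsOpenPosMeasure] {f : X → V} (hf : Continuous f) (hc : HasCompactSupport f)
    (h0 : f ≠ 0) : 0 < ∫ x, ‖f x‖ ^ 2 ∂μ := by
  obtain ⟨x, hx⟩ := Function.ne_iff.1 h0
  exact (hf.norm.pow 2).integral_pos_of_hasCompactSupport_nonneg_nonzero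
    (hc.comp_left (g := fun z : V => ‖z‖ ^ 2) (by simp)) (fun y => by positivity)
    (x := x) (by simpa using hx)

variable [FiniteDimensional ℝ E] {μ : Measure E} [μ.IsAddHaarMeasure]

theorem integral_mul_two_mul_inner_fderiv {F : Type*} [NormedAddCommGroup F]
    [InnerProductSpace ℝ F] {f : E → F} (hf : ContDiff ℝ 1 f) (hc : HasCompactSupport f)
    (ℓ : E →L[ℝ] ℝ) (v : E) :
    ∫ y, ℓ y * (2 * inner ℝ (f y) (fderiv ℝ f y v)) ∂μ = -(ℓ v * ∫ y, ‖f y‖ ^ 2 ∂μ) := by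
  have hsq : ∀ y, fderiv ℝ (fun y => ‖f y‖ ^ 2) y v = 2 * inner ℝ (f y) (fderiv ℝ f y v) :=
    fun y => by
      rw [(hf.differentiable one_ne_zero y).hasFDerivAt.norm_sq.fderiv]
      simp
  have hsmooth : ContDiff ℝ 1 fun y => ‖f y‖ ^ 2 := hf.norm_sq ℝ
  have hsupp : HasCompactSupport fun y => ‖f y‖ ^ 2 :=
    hc.comp_left (g := fun z : F => ‖z‖ ^ 2) (by simp)
  have hderiv : Continuous fun y => fderiv ℝ (fun y => ‖f y‖ ^ 2) y v :=
    (hsmooth.continuous_fderiv one_ne_zero).clm_apply continuous_const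
  have hparts := integral_mul_fderiv_eq_neg_fderiv_mul_of_integrable (μ := μ)
    (f := ℓ) (g := fun y => ‖f y‖ ^ 2) (v := v)
    (by simpa using (integrable_norm_sq_of_hasCompactSupport hf.continuous hc).const_mul (ℓ v))
    ((ℓ.continuous.mul hderiv).integrable_of_hasCompactSupport
      (hsupp.fderiv_apply ℝ v).mul_left)
    ((ℓ.continuous.mul hsmooth.continuous).integrable_of_hasCompactSupport hsupp.mul_left)
    (fun y _ => ℓ.differentiableAt) (fun y _ => hsmooth.differentiable one_ne_zero y)
  simpa only [hsq, ContinuousLinearMap.fderiv, integral_const_mul] using hparts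

theorem integral_norm_covDeriv_sq_add (hψ : ContDiff ℝ 1 ψ) (hc : HasCompactSupport ψ)
    (ha : Continuous a) (ℓ : E →L[ℝ] ℝ) (v : E) :
    (∫ y, ‖covDeriv a v ψ y‖ ^ 2 ∂μ) + ∫ y, ℓ y ^ 2 * ‖ψ y‖ ^ 2 ∂μ =
      ℓ v * (∫ y, ‖ψ y‖ ^ 2 ∂μ) + ∫ y, ‖covDeriv a v ψ y + ℓ y • ψ y‖ ^ 2 ∂μ := by
  have hcov : Integrable (fun y => ‖covDeriv a v ψ y‖ ^ 2) μ :=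
    integrable_norm_sq_of_hasCompactSupport (continuous_covDeriv hψ ha)
      (hasCompactSupport_covDeriv hc)
  have hpot : Integrable (fun y => ℓ y ^ 2 * ‖ψ y‖ ^ 2) μ := by
    simpa only [Pi.smul_apply', norm_smul, mul_pow, Real.norm_eq_abs, sq_abs] using
      integrable_norm_sq_of_hasCompactSupport (μ := μ) (ℓ.continuous.smul hψ.continuous)
        (hc.smul_left (f := ℓ))
  have hcross : Integrable (fun y => ℓ y * (2 * inner ℝ (ψ y) (fderiv ℝ ψ y v))) μ := by
    have hderiv : Continuous fun y => fderiv ℝ ψ y v :=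
      (hψ.continuous_fderiv one_ne_zero).clm_apply continuous_const
    exact (ℓ.continuous.mul (continuous_const.mul (hψ.continuous.inner hderiv))
      ).integrable_of_hasCompactSupport (hc.mono fun y hy h => hy (by simp [h]))
  simp only [norm_covDeriv_add_smul_sq]
  rw [integral_add (hcov.fun_add hcross) hpot, integral_add hcov hcross,
    integral_mul_two_mul_inner_fderiv hψ hc]
  ring

end CovariantDerivative

section RayleighQuotient

/-- The `j`-th component of the singularly scaled potential `A_s(y) = e^{s/2} A(e^{s/2} y)`. -/
noncomputable def scaledPotential (A : ℝ² → Fin 2 → ℝ) (s : ℝ) (j : Fin 2) (y : ℝ²) : ℝ :=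
  Real.exp (s / 2) * A (Real.exp (s / 2) • y) j

variable {A : ℝ² → Fin 2 → ℝ} {ψ : ℝ² → ℂ}

theorem continuous_scaledPotential (hA : ∀ j, Continuous fun x => A x j) (s : ℝ) (j : Fin 2) :
    Continuous (scaledPotential A s j) :=
  continuous_const.mul ((hA j).comp (continuous_const_smul _))

theorem lsForm2_eq_half_add_sum (hA : ∀ j, Continuous fun x => A x j) (s : ℝ)
    (hψ : ContDiff ℝ 1 ψ) (hc : HasCompactSupport ψ) :
    lsForm2 A s ψ = 1 / 2 * (∫ y, ‖ψ y‖ ^ 2) +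
      ∑ j, ∫ y, ‖covDeriv (scaledPotential A s j) (EuclideanSpace.single j (1 : ℝ)) ψ y +
        (y j / 4) • ψ y‖ ^ 2 := by
  have hkin : ∀ j, Integrable fun y =>
      ‖covDeriv (scaledPotential A s j) (EuclideanSpace.single j (1 : ℝ)) ψ y‖ ^ 2 := fun j =>
    integrable_norm_sq_of_hasCompactSupport
      (continuous_covDeriv hψ (continuous_scaledPotential hA s j)) (hasCompactSupport_covDeriv hc)
  have hpot : ∀ j : Fin 2, Integrable fun y : ℝ² => (y j / 4) ^ 2 * ‖ψ y‖ ^ 2 := fun j =>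
    Continuous.integrable_of_hasCompactSupport (by have := hψ.continuous; fun_prop)
      (hc.mono fun y hy h => hy (by simp [h]))
  have hpotsum : 1 / 16 * ∫ y, ‖y‖ ^ 2 * ‖ψ y‖ ^ 2 =
      ∑ j : Fin 2, ∫ y : ℝ², (y j / 4) ^ 2 * ‖ψ y‖ ^ 2 := by
    rw [← integral_finsetSum _ fun j _ => hpot j, ← integral_const_mul]
    congr with y
    simp only [EuclideanSpace.real_norm_sq_eq, Fin.sum_univ_two]
    ring
  have hsquare : ∀ j : Fin 2,
      (∫ y, ‖covDeriv (scaledPotential A s j) (EuclideanSpace.single j (1 : ℝ)) ψ y‖ ^ 2) +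
        ∫ y : ℝ², (y j / 4) ^ 2 * ‖ψ y‖ ^ 2 = 1 / 4 * (∫ y, ‖ψ y‖ ^ 2) +
      ∫ y, ‖covDeriv (scaledPotential A s j) (EuclideanSpace.single j (1 : ℝ)) ψ y +
        (y j / 4) • ψ y‖ ^ 2 := fun j => by
    simpa [div_eq_inv_mul] using integral_norm_covDeriv_sq_add hψ hc
      (continuous_scaledPotential hA s j) ((4⁻¹ : ℝ) • EuclideanSpace.proj (𝕜 := ℝ) j)
      (EuclideanSpace.single j (1 : ℝ))
  calc lsForm2 A s ψ
      = (∑ j, ∫ y, ‖covDeriv (scaledPotential A s j) (EuclideanSpace.single j (1 : ℝ)) ψ y‖ ^ 2) +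
          ∑ j : Fin 2, ∫ y : ℝ², (y j / 4) ^ 2 * ‖ψ y‖ ^ 2 := by
        rw [← integral_finsetSum _ fun j _ => hkin j, ← hpotsum]
        rfl
    _ = _ := by
        rw [← Finset.sum_add_distrib, Finset.sum_congr rfl fun j _ => hsquare j,
          Finset.sum_add_distrib]
        simp only [Fin.sum_univ_two]
        ring

theorem half_le_rayleighQuotient (hA : ∀ j, Continuous fun x => A x j) (s : ℝ)
    (hψ : ContDiff ℝ 1 ψ) (hc : HasCompactSupport ψ) (h0 : ψ ≠ 0) :
    1 / 2 ≤ lsForm2 A s ψ / ∫ y, ‖ψ y‖ ^ 2 := by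
  rw [le_div_iff₀ (integral_norm_sq_pos hψ.continuous hc h0), lsForm2_eq_half_add_sum hA s hψ hc]
  exact le_add_of_nonneg_right
    (Finset.sum_nonneg fun j _ => integral_nonneg fun y => by positivity)

theorem half_le_lambdaB2 (hA : ∀ j, Continuous fun x => A x j) (s : ℝ) : 1 / 2 ≤ lambdaB2 A s := by
  refine le_csInf ?_ ?_
  · let χ : ContDiffBump (0 : ℝ²) := default
    have hχ0 : (fun y => (χ y : ℂ)) ≠ 0 := fun h => by
      simpa [χ.one_of_mem_closedBall (Metric.mem_closedBall_self χ.rIn_pos.le)] using congrFun h 0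
    exact ⟨_, _, Complex.ofRealCLM.contDiff.comp χ.contDiff,
      χ.hasCompactSupport.comp_left (g := ((↑) : ℝ → ℂ)) Complex.ofReal_zero, hχ0, rfl⟩
  · rintro q ⟨ψ, hψ, hc, h0, rfl⟩
    exact half_le_rayleighQuotient hA s (hψ.of_le (by exact_mod_cast le_top)) hc h0

theorem lambdaB2_le (hA : ∀ j, Continuous fun x => A x j) (s : ℝ)
    (hψ : ContDiff ℝ ∞ ψ) (hc : HasCompactSupport ψ) (h0 : ψ ≠ 0) :
    lambdaB2 A s ≤ lsForm2 A s ψ / ∫ y, ‖ψ y‖ ^ 2 := by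
  refine csInf_le ⟨1 / 2, ?_⟩ ⟨ψ, hψ, hc, h0, rfl⟩
  rintro q ⟨φ, hφ, hφc, hφ0, rfl⟩
  exact half_le_rayleighQuotient hA s (hφ.of_le (by exact_mod_cast le_top)) hφc hφ0

theorem continuous_poincareGauge2 {B : ℝ² → ℝ} (hB : Continuous B) (j : Fin 2) :
    Continuous fun x => poincareGauge2 B x j := by
  have hint : Continuous fun x : ℝ² => ∫ u in (0 : ℝ)..1, B (u • x) * u :=
    intervalIntegral.continuous_parametric_intervalIntegral_of_continuous' (by fun_prop) _ _
  have hrot : Continuous fun x : ℝ² => ![-x 1, x 0] j := by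
    fin_cases j
    exacts [(by fun_prop : Continuous fun x : ℝ² => -x 1),
      (by fun_prop : Continuous fun x : ℝ² => x 0)]
  exact hrot.mul hint

end RayleighQuotient

section Argument

variable {V : Type*} {F : ℝ → V}

theorem periodic_comp_arg_eq (hper : Function.Periodic F (2 * π)) {z w : ℂ} (hz : z ≠ 0)
    (hw : w ≠ 0) : F w.arg = F ((Complex.log (w / z)).im + z.arg) := by
  have hangle : (w.arg : Real.Angle) = ((w / z).arg + z.arg : ℝ) := by
    rw [Real.Angle.coe_add, Complex.arg_div_coe_angle hw hz, sub_add_cancel]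
  obtain ⟨k, hk⟩ := Real.Angle.angle_eq_iff_two_pi_dvd_sub.1 hangle
  rw [Complex.log_im, show w.arg = (w / z).arg + z.arg + k * (2 * π) by linarith]
  exact hper.int_mul k _

variable [NormedAddCommGroup V] [NormedSpace ℝ V]

theorem contDiffAt_periodic_comp_arg {n : WithTop ℕ∞} (hF : ContDiff ℝ n F)
    (hper : Function.Periodic F (2 * π)) {z : ℂ} (hz : z ≠ 0) :
    ContDiffAt ℝ n (fun w => F w.arg) z := by
  have hslit : z / z ∈ Complex.slitPlane := by simp [hz]
  have hlog : ContDiffAt ℝ n (fun w => Complex.log (w / z)) z :=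
    ((Complex.contDiffAt_log hslit).comp (f := (· / z)) z
      (contDiffAt_id.div_const z)).restrict_scalars ℝ
  exact (hF.contDiffAt.comp z
    ((Complex.imCLM.contDiff.contDiffAt.comp z hlog).add contDiffAt_const)).congr_of_eventuallyEq
    ((eventually_ne_nhds hz).mono fun w hw => periodic_comp_arg_eq hper hz hw)

theorem hasFDerivAt_periodic_comp_arg (hper : Function.Periodic F (2 * π)) {z : ℂ} (hz : z ≠ 0)
    {F' : V} (hF : HasDerivAt F F' z.arg) :
    HasFDerivAt (fun w => F w.arg)
      ((Complex.imCLM.comp (z⁻¹ • (1 : ℂ →L[ℝ] ℂ))).smulRight F') z := by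
  have hlog : HasFDerivAt (fun w => Complex.log (w / z)) (z⁻¹ • (1 : ℂ →L[ℝ] ℂ)) z := by
    simpa [hz] using
      (((hasDerivAt_id z).div_const z).clog (by simp [hz])).complexToReal_fderiv
  have hangle := (Complex.imCLM.hasFDerivAt.comp z hlog).add_const z.arg
  have hF' : HasDerivAt F F' ((Complex.log (z / z)).im + z.arg) := by simpa using hF
  exact (hF'.hasFDerivAt.comp z hangle).congr_of_eventuallyEq
    ((eventually_ne_nhds hz).mono fun w hw => periodic_comp_arg_eq hper hz hw)

end Argument

section RayFlux

theorem contDiff_integral_smul {P G V : Type*} [NormedAddCommGroup P] [NormedSpace ℝ P]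
    [NormedAddCommGroup G] [NormedSpace ℝ G] [MeasurableSpace G] [BorelSpace G]
    [NormedAddCommGroup V] [NormedSpace ℝ V] {μ : Measure G} {n : ℕ∞} {f : G → ℝ} {g : P → G → V}
    {k : Set G} (hk : IsCompact k) (hgk : ∀ p, ∀ x ∉ k, g p x = 0)
    (hf : LocallyIntegrable f μ) (hg : ContDiff ℝ n fun q : P × G => g q.1 q.2) :
    ContDiff ℝ n fun p => ∫ x, f x • g p x ∂μ := by
  have hconv := contDiffOn_convolution_right_with_param_comp (μ := μ)
    (ContinuousLinearMap.lsmul ℝ ℝ) (s := Set.univ) (v := fun _ : P => (0 : G))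
    (g := fun p x => g p (-x)) contDiffOn_const isOpen_univ hk.neg
    (fun p x _ hx => hgk p _ (by simpa using hx)) hf
    (hg.comp (contDiff_fst.prodMk contDiff_snd.neg)).contDiffOn
  simpa [convolution, contDiffOn_univ] using hconv

/-- The flux density `∫₀^∞ B (r v) r dr` of the field `B` through the ray spanned by `v`. -/
noncomputable def rayFlux {E : Type*} [NormedAddCommGroup E] [NormedSpace ℝ E]
    (B : E → ℝ) (v : E) : ℝ :=
  ∫ r in Set.Ioi (0 : ℝ), B (r • v) * r

variable {E : Type*} [NormedAddCommGroup E] [NormedSpace ℝ E] {B : E → ℝ}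

theorem rayFlux_smul (B : E → ℝ) {c : ℝ} (hc : 0 < c) (v : E) :
    rayFlux B (c • v) = rayFlux B v / c ^ 2 := by
  have hscale := integral_comp_mul_right_Ioi (fun r => B (r • v) * r) 0 hc
  have hpt : ∀ r : ℝ, B ((r * c) • v) * (r * c) = B (r • c • v) * r * c := fun r => by
    rw [mul_smul, mul_assoc]
  simp only [zero_mul, hpt, integral_mul_const, smul_eq_mul] at hscale
  rw [rayFlux, rayFlux, eq_div_iff (by positivity), pow_two, ← mul_assoc, hscale]
  field_simp

theorem intervalIntegral_smul_mul_eq_rayFlux {R : ℝ} (hR : ∀ x, R ≤ ‖x‖ → B x = 0) {x : E}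
    (hx : R ≤ ‖x‖) : ∫ u in (0 : ℝ)..1, B (u • x) * u = rayFlux B x := by
  rw [intervalIntegral.integral_of_le zero_le_one, rayFlux]
  refine (setIntegral_eq_of_subset_of_forall_sdiff_eq_zero measurableSet_Ioi
    (fun u hu => hu.1) fun u hu => ?_).symm
  have hu1 : 1 < u := not_le.1 fun h => hu.2 ⟨hu.1, h⟩
  have hnorm : ‖x‖ ≤ ‖u • x‖ := by
    rw [norm_smul, Real.norm_of_nonneg (zero_le_one.trans hu1.le)]
    exact le_mul_of_one_le_left (norm_nonneg x) hu1.le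
  rw [hR _ (hx.trans hnorm), zero_mul]

theorem contDiff_rayFlux_comp {P : Type*} [NormedAddCommGroup P] [NormedSpace ℝ P] {n : ℕ∞}
    (hB : ContDiff ℝ n B) (hc : HasCompactSupport B) {u : P → E} (hu : ContDiff ℝ n u)
    (hu1 : ∀ p, ‖u p‖ = 1) : ContDiff ℝ n fun p => rayFlux B (u p) := by
  obtain ⟨R, -, hR⟩ := hc.exists_pos_le_norm
  have hsmooth := contDiff_integral_smul (μ := volume) (k := Set.Icc (-R) R)
    (f := (Set.Ioi (0 : ℝ)).indicator id) (g := fun p r => B (r • u p)) isCompact_Icc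
    (fun p r hr => hR _ (by
      rw [norm_smul, hu1, mul_one, Real.norm_eq_abs]
      exact (not_le.1 fun h => hr (abs_le.1 h)).le))
    (continuous_id.locallyIntegrable.indicator measurableSet_Ioi)
    (hB.comp (contDiff_snd.smul (hu.comp contDiff_fst)))
  convert hsmooth using 2 with p
  rw [rayFlux, ← integral_indicator measurableSet_Ioi]
  congr with r
  by_cases hr : r ∈ Set.Ioi (0 : ℝ) <;> simp [hr, mul_comm]

end RayFlux

section PolarCoordinates

/-- The isometry `x + iy ↦ (x, y)` of the complex plane onto `ℝ²`. -/
noncomputable def planeEquiv : ℂ ≃ₗᵢ[ℝ] ℝ² := Complex.orthonormalBasisOneI.repr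

/-- The unit vector of `ℝ²` with polar angle `t`. -/
noncomputable def unitVector (t : ℝ) : ℝ² := planeEquiv (Complex.exp (t * Complex.I))

/-- The polar angle in `(-π, π]` of a planar vector; it is `0` at the origin. -/
noncomputable def polarAngle (x : ℝ²) : ℝ := (planeEquiv.symm x).arg

theorem norm_unitVector (t : ℝ) : ‖unitVector t‖ = 1 := by
  rw [unitVector, LinearIsometryEquiv.norm_map, Complex.norm_exp_ofReal_mul_I]

theorem contDiff_unitVector : ContDiff ℝ ∞ unitVector :=
  planeEquiv.contDiff.comp
    (Complex.contDiff_exp.comp (Complex.ofRealCLM.contDiff.mul contDiff_const))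

theorem unitVector_periodic : Function.Periodic unitVector (2 * π) := fun t => by
  simp [unitVector, add_mul, Complex.exp_add]

theorem norm_smul_unitVector_polarAngle (x : ℝ²) : ‖x‖ • unitVector (polarAngle x) = x := by
  rw [unitVector, ← map_smul, Complex.real_smul, ← planeEquiv.symm.norm_map x, polarAngle,
    Complex.norm_mul_exp_arg_mul_I, LinearIsometryEquiv.apply_symm_apply]

theorem im_inv_planeEquiv_symm_mul_single (x : ℝ²) (j : Fin 2) :
    ((planeEquiv.symm x)⁻¹ * planeEquiv.symm (EuclideanSpace.single j (1 : ℝ))).im =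
      ![-x 1, x 0] j / ‖x‖ ^ 2 := by
  have hsymm : ∀ y : ℝ², planeEquiv.symm y = y 0 + y 1 * Complex.I :=
    Complex.orthonormalBasisOneI_repr_symm_apply
  have hnorm : Complex.normSq (x 0 + x 1 * Complex.I) = ‖x‖ ^ 2 := by
    rw [← hsymm, Complex.normSq_eq_norm_sq, LinearIsometryEquiv.norm_map]
  fin_cases j <;> simp [hsymm, Complex.inv_re, Complex.inv_im, hnorm]

theorem contDiffAt_periodic_comp_polarAngle {V : Type*} [NormedAddCommGroup V] [NormedSpace ℝ V]
    {F : ℝ → V} {n : WithTop ℕ∞} (hF : ContDiff ℝ n F) (hper : Function.Periodic F (2 * π))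
    {x : ℝ²} (hx : x ≠ 0) : ContDiffAt ℝ n (fun y => F (polarAngle y)) x :=
  (contDiffAt_periodic_comp_arg hF hper (planeEquiv.symm.map_eq_zero_iff.not.2 hx)).comp x
    planeEquiv.symm.contDiff.contDiffAt

theorem fderiv_periodic_comp_polarAngle_single {V : Type*} [NormedAddCommGroup V]
    [NormedSpace ℝ V] {F : ℝ → V} (hper : Function.Periodic F (2 * π)) {x : ℝ²} (hx : x ≠ 0)
    {F' : V} (hF : HasDerivAt F F' (polarAngle x)) (j : Fin 2) :
    fderiv ℝ (fun y => F (polarAngle y)) x (EuclideanSpace.single j 1) =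
      (![-x 1, x 0] j / ‖x‖ ^ 2) • F' := by
  have hsymm : HasFDerivAt planeEquiv.symm (planeEquiv.symm : ℝ² →L[ℝ] ℂ) x :=
    (planeEquiv.symm.toContinuousLinearEquiv : ℝ² →L[ℝ] ℂ).hasFDerivAt
  have hcomp := (hasFDerivAt_periodic_comp_arg hper
    (planeEquiv.symm.map_eq_zero_iff.not.2 hx) hF).comp x hsymm
  rw [← im_inv_planeEquiv_symm_mul_single]
  exact DFunLike.congr_fun hcomp.fderiv _

theorem integrableOn_mul_comp_smul_unitVector {B : ℝ² → ℝ} (hB : Continuous B)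
    (hc : HasCompactSupport B) :
    IntegrableOn (fun p : ℝ × ℝ => p.1 * B (p.1 • unitVector p.2))
      (Set.Ioi 0 ×ˢ Set.Ioo (-π) π) := by
  obtain ⟨R, -, hR⟩ := hc.exists_pos_le_norm
  have hcont : Continuous fun p : ℝ × ℝ => p.1 * B (p.1 • unitVector p.2) := by
    have := contDiff_unitVector.continuous
    fun_prop
  refine (hcont.continuousOn.integrableOn_compact ((isCompact_Icc (a := 0) (b := R)).prod
    (isCompact_Icc (a := -π) (b := π)))).of_forall_sdiff_eq_zero
    (measurableSet_Ioi.prod measurableSet_Ioo) fun p hp => ?_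
  obtain ⟨⟨hp0, hpangle⟩, hpnot⟩ := hp
  have hpR : R ≤ p.1 :=
    le_of_not_ge fun h => hpnot ⟨⟨le_of_lt hp0, h⟩, Set.Ioo_subset_Icc_self hpangle⟩
  rw [hR _ (by simpa [norm_smul, norm_unitVector] using hpR.trans (le_abs_self _)), mul_zero]

theorem intervalIntegral_rayFlux_unitVector {B : ℝ² → ℝ} (hB : Continuous B)
    (hc : HasCompactSupport B) : ∫ t in (-π)..π, rayFlux B (unitVector t) = ∫ x, B x := by
  have hpolar : ∀ p : ℝ × ℝ, planeEquiv (Complex.polarCoord.symm p) = p.1 • unitVector p.2 :=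
    fun p => by
      rw [unitVector, ← map_smul, Complex.polarCoord_symm_apply, Complex.real_smul,
        Complex.exp_mul_I, Complex.ofReal_cos, Complex.ofReal_sin]
  calc ∫ t in (-π)..π, rayFlux B (unitVector t)
      = ∫ t in Set.Ioo (-π) π, ∫ r in Set.Ioi 0, r * B (r • unitVector t) := by
        rw [intervalIntegral.integral_of_le (by linarith [pi_pos]), integral_Ioc_eq_integral_Ioo]
        simp only [rayFlux, mul_comm]
    _ = ∫ p in Set.Ioi 0 ×ˢ Set.Ioo (-π) π, p.1 * B (p.1 • unitVector p.2) := by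
        have hint := integrableOn_mul_comp_smul_unitVector hB hc
        rw [Measure.volume_eq_prod, setIntegral_prod _ hint]
        exact (integral_integral_swap (by rwa [Measure.prod_restrict])).symm
    _ = ∫ z, B (planeEquiv z) := by
        rw [← Complex.integral_comp_polarCoord_symm, polarCoord_target]
        simp only [hpolar, smul_eq_mul]
    _ = ∫ x, B x :=
        Complex.orthonormalBasisOneI.measurePreserving_repr.integral_comp
          planeEquiv.toHomeomorph.measurableEmbedding B

end PolarCoordinates

section Gauge

/-- The unimodular function `t ↦ exp (i ∫₀ᵗ h)`, which solves `F' = i h F`. -/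
noncomputable def phase (h : ℝ → ℝ) (t : ℝ) : ℂ :=
  Complex.exp ((∫ τ in (0 : ℝ)..t, h τ : ℝ) * Complex.I)

variable {h : ℝ → ℝ}

theorem norm_phase (h : ℝ → ℝ) (t : ℝ) : ‖phase h t‖ = 1 :=
  Complex.norm_exp_ofReal_mul_I _

theorem hasDerivAt_phase (hh : Continuous h) (t : ℝ) :
    HasDerivAt (phase h) (Complex.I * h t * phase h t) t := by
  have hprim : HasDerivAt (fun t => ∫ τ in (0 : ℝ)..t, h τ) (h t) t :=
    (hh.integral_hasStrictDerivAt 0 t).hasDerivAt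
  exact (hprim.ofReal_comp.mul_const Complex.I).cexp.congr_deriv (by rw [phase]; ring)

theorem contDiff_phase (hh : ContDiff ℝ ∞ h) : ContDiff ℝ ∞ (phase h) := by
  have hprim : ContDiff ℝ ∞ fun t => ∫ τ in (0 : ℝ)..t, h τ := by
    have hderiv := fun t => (hh.continuous.integral_hasStrictDerivAt 0 t).hasDerivAt
    refine contDiff_infty_iff_deriv.2 ⟨fun t => (hderiv t).differentiableAt, ?_⟩
    rwa [funext fun t => (hderiv t).deriv]
  exact Complex.contDiff_exp.comp ((Complex.ofRealCLM.contDiff.comp hprim).mul contDiff_const)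

theorem phase_periodic {T : ℝ} (hh : Continuous h) (hper : Function.Periodic h T) {a : ℝ} {n : ℤ}
    (hn : ∫ τ in a..a + T, h τ = 2 * π * n) : Function.Periodic (phase h) T := fun t => by
  have hprim : ∫ τ in (0 : ℝ)..t + T, h τ = (∫ τ in (0 : ℝ)..t, h τ) + 2 * π * n := by
    rw [← intervalIntegral.integral_add_adjacent_intervals (hh.intervalIntegrable 0 t)
      (hh.intervalIntegrable t (t + T)), hper.intervalIntegral_add_eq t a, hn]
  rw [phase, phase, hprim, Complex.exp_eq_exp_iff_exists_int]
  exact ⟨n, by push_cast; ring⟩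

/-- The gauge function `exp (i ∫₀^θ Φ)`, where `θ` is the polar angle and `Φ` the angular flux
density of `B`. It trivialises the Poincaré-gauge potential of `B` outside a disc
containing the support of `B`. -/
noncomputable def fluxGauge (B : ℝ² → ℝ) (x : ℝ²) : ℂ :=
  phase (fun t => rayFlux B (unitVector t)) (polarAngle x)

variable {B : ℝ² → ℝ}

theorem norm_fluxGauge (B : ℝ² → ℝ) (x : ℝ²) : ‖fluxGauge B x‖ = 1 :=
  norm_phase _ _

theorem rayFlux_unitVector_periodic (B : ℝ² → ℝ) :
    Function.Periodic (fun t => rayFlux B (unitVector t)) (2 * π) :=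
  unitVector_periodic.comp (rayFlux B)

theorem contDiff_rayFlux_unitVector (hB : ContDiff ℝ ∞ B) (hc : HasCompactSupport B) :
    ContDiff ℝ ∞ fun t => rayFlux B (unitVector t) :=
  contDiff_rayFlux_comp hB hc contDiff_unitVector norm_unitVector

theorem phase_rayFlux_periodic (hB : ContDiff ℝ ∞ B) (hc : HasCompactSupport B) {n : ℤ}
    (hn : ∫ x, B x = 2 * π * n) :
    Function.Periodic (phase fun t => rayFlux B (unitVector t)) (2 * π) := by
  refine phase_periodic (a := -π) (n := n) (contDiff_rayFlux_unitVector hB hc).continuous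
    (rayFlux_unitVector_periodic B) ?_
  rw [show -π + 2 * π = π by ring, intervalIntegral_rayFlux_unitVector hB.continuous hc, hn]

theorem contDiffAt_fluxGauge (hB : ContDiff ℝ ∞ B) (hc : HasCompactSupport B) {n : ℤ}
    (hn : ∫ x, B x = 2 * π * n) {x : ℝ²} (hx : x ≠ 0) : ContDiffAt ℝ ∞ (fluxGauge B) x :=
  contDiffAt_periodic_comp_polarAngle
    (contDiff_phase (contDiff_rayFlux_unitVector hB hc)) (phase_rayFlux_periodic hB hc hn) hx

theorem scaledPotential_poincareGauge2 {R s : ℝ} (hR : ∀ x, R ≤ ‖x‖ → B x = 0) {y : ℝ²}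
    (hy : y ≠ 0) (hRy : R ≤ Real.exp (s / 2) * ‖y‖) (j : Fin 2) :
    scaledPotential (poincareGauge2 B) s j y =
      rayFlux B (unitVector (polarAngle y)) * (![-y 1, y 0] j / ‖y‖ ^ 2) := by
  have hexp := Real.exp_pos (s / 2)
  have hrot : ![-(Real.exp (s / 2) • y) 1, (Real.exp (s / 2) • y) 0] j =
      Real.exp (s / 2) * ![-y 1, y 0] j := by
    fin_cases j <;> simp
  have hray : rayFlux B y = rayFlux B (unitVector (polarAngle y)) / ‖y‖ ^ 2 := by
    rw [← rayFlux_smul B (norm_pos_iff.2 hy), norm_smul_unitVector_polarAngle]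
  rw [scaledPotential, poincareGauge2, intervalIntegral_smul_mul_eq_rayFlux hR
    (by rwa [norm_smul, Real.norm_of_nonneg hexp.le]), hrot, rayFlux_smul B hexp, hray]
  field_simp

theorem covDeriv_fluxGauge_eq_zero (hB : ContDiff ℝ ∞ B) (hc : HasCompactSupport B) {n : ℤ}
    (hn : ∫ x, B x = 2 * π * n) {R s : ℝ} (hR : ∀ x, R ≤ ‖x‖ → B x = 0) {y : ℝ²}
    (hy : y ≠ 0) (hRy : R ≤ Real.exp (s / 2) * ‖y‖) (j : Fin 2) :
    covDeriv (scaledPotential (poincareGauge2 B) s j) (EuclideanSpace.single j 1)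
      (fluxGauge B) y = 0 := by
  have hphase := hasDerivAt_phase (contDiff_rayFlux_unitVector hB hc).continuous (polarAngle y)
  have hderiv := fderiv_periodic_comp_polarAngle_single (phase_rayFlux_periodic hB hc hn) hy
    hphase j
  rw [covDeriv, scaledPotential_poincareGauge2 hR hy hRy j]
  unfold fluxGauge
  rw [hderiv, Complex.real_smul]
  push_cast
  ring

end Gauge

section Cutoff

variable {E : Type*} [NormedAddCommGroup E]

/-- The power cutoff `χ (|y|^ε)`, which for a bump `χ` around `1` tends to `1` as `ε → 0⁺`. -/
noncomputable def powerCutoff (χ : ℝ → ℝ) (ε : ℝ) (y : E) : ℝ :=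
  χ (‖y‖ ^ ε)

variable {χ : ℝ → ℝ} {ε : ℝ}

theorem zero_notMem_tsupport_powerCutoff (hχ0 : 0 ∉ tsupport χ) (hε : 0 < ε) :
    (0 : E) ∉ tsupport (powerCutoff χ ε) := by
  rw [notMem_tsupport_iff_eventuallyEq] at hχ0 ⊢
  have hcont : Continuous fun y : E => ‖y‖ ^ ε := continuous_norm.rpow_const fun y => .inr hε.le
  have htend : Tendsto (fun y : E => ‖y‖ ^ ε) (𝓝 0) (𝓝 0) := by
    simpa [hε.ne'] using hcont.tendsto 0
  exact htend.eventually hχ0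

theorem hasCompactSupport_powerCutoff [ProperSpace E] (hχ : HasCompactSupport χ) (hε : 0 < ε) :
    HasCompactSupport (powerCutoff χ ε : E → ℝ) := by
  rw [hasCompactSupport_iff_eventuallyEq, coclosedCompact_eq_cocompact] at hχ ⊢
  exact ((tendsto_rpow_atTop hε).comp tendsto_norm_cocompact_atTop).eventually
    (hχ.filter_mono atTop_le_cocompact)

theorem tendsto_powerCutoff (hχ : Continuous χ) {y : E} (hy : y ≠ 0) :
    Tendsto (fun ε => powerCutoff χ ε y) (𝓝[>] 0) (𝓝 (χ 1)) := by
  have hpow : Tendsto (fun ε : ℝ => ‖y‖ ^ ε) (𝓝 0) (𝓝 1) := by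
    simpa using (Real.continuousAt_const_rpow (norm_ne_zero_iff.2 hy)).tendsto (x := 0)
  exact (hχ.tendsto 1).comp (hpow.mono_left nhdsWithin_le_nhds)

theorem continuous_powerCutoff (hχ : Continuous χ) (hε : 0 ≤ ε) :
    Continuous (powerCutoff χ ε : E → ℝ) :=
  hχ.comp (continuous_norm.rpow_const fun _ => .inr hε)

theorem tendsto_integral_powerCutoff_sq_mul [MeasurableSpace E] [BorelSpace E]
    {μ : Measure E} [NullSingletonClass μ] (hχ : Continuous χ) (hχ1 : ∀ u, |χ u| ≤ 1) {w : E → ℝ}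
    (hw : Integrable w μ) :
    Tendsto (fun ε => ∫ y, powerCutoff χ ε y ^ 2 * w y ∂μ) (𝓝[>] 0)
      (𝓝 (∫ y, χ 1 ^ 2 * w y ∂μ)) := by
  refine tendsto_integral_filter_of_dominated_convergence (fun y => ‖w y‖) ?_ ?_ hw.norm ?_
  · filter_upwards [self_mem_nhdsWithin] with ε hε
    exact ((continuous_powerCutoff hχ (le_of_lt hε)).pow 2).aestronglyMeasurable.mul
      hw.aestronglyMeasurable
  · refine .of_forall fun ε => .of_forall fun y => ?_
    rw [norm_mul, Real.norm_of_nonneg (sq_nonneg _)]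
    exact mul_le_of_le_one_left (norm_nonneg _) ((sq_le_one_iff_abs_le_one _).2 (hχ1 _))
  · filter_upwards [μ.ae_ne 0] with y hy
    exact ((tendsto_powerCutoff hχ hy).pow 2).mul_const _

variable [InnerProductSpace ℝ E]

theorem contDiff_powerCutoff {n : WithTop ℕ∞} (hχ : ContDiff ℝ n χ) (hχ0 : 0 ∉ tsupport χ)
    (hε : 0 < ε) : ContDiff ℝ n (powerCutoff χ ε : E → ℝ) :=
  contMDiff_iff_contDiff.1 (contMDiff_of_tsupport fun y hy => by
    have hy0 : y ≠ 0 := ne_of_mem_of_not_mem hy (zero_notMem_tsupport_powerCutoff hχ0 hε)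
    exact (hχ.contDiffAt.comp y
      ((contDiffAt_norm ℝ hy0).rpow_const_of_ne (norm_ne_zero_iff.2 hy0))).contMDiffAt)

theorem norm_fderiv_powerCutoff (hχ : Differentiable ℝ χ) {y : E} (hy : y ≠ 0) :
    ‖fderiv ℝ (powerCutoff χ ε) y‖ = |deriv χ (‖y‖ ^ ε) * (ε * ‖y‖ ^ (ε - 1))| := by
  have : Nontrivial E := ⟨y, 0, hy⟩
  have hnorm : DifferentiableAt ℝ (fun y : E => ‖y‖) y :=
    (contDiffAt_norm ℝ hy).differentiableAt one_ne_zero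
  have hprofile : HasDerivAt (fun r : ℝ => χ (r ^ ε))
      (deriv χ (‖y‖ ^ ε) * (ε * ‖y‖ ^ (ε - 1))) ‖y‖ :=
    (hχ _).hasDerivAt.comp _ (Real.hasDerivAt_rpow_const (.inl (norm_ne_zero_iff.2 hy)))
  have hcomp := hprofile.comp_hasFDerivAt y hnorm.hasFDerivAt
  rw [show fderiv ℝ (powerCutoff χ ε) y = _ from hcomp.fderiv, norm_smul, norm_fderiv_norm hnorm,
    mul_one, Real.norm_eq_abs]

-- In dimension two the substitution `u = r ^ ε` turns the energy into `ε` times that of `χ`.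
theorem integral_norm_fderiv_powerCutoff_sq [MeasurableSpace E] [BorelSpace E]
    [FiniteDimensional ℝ E] (μ : Measure E) [μ.IsAddHaarMeasure]
    (hdim : Module.finrank ℝ E = 2) (hχ : Differentiable ℝ χ) (hε : 0 < ε) :
    ∫ y, ‖fderiv ℝ (powerCutoff χ ε : E → ℝ) y‖ ^ 2 ∂μ =
      ε * (2 * (μ.real (Metric.ball 0 1) * ∫ u in Set.Ioi (0 : ℝ), u * deriv χ u ^ 2)) := by
  have : Nontrivial E := Module.nontrivial_of_finrank_pos (R := ℝ) (by omega)
  calc ∫ y, ‖fderiv ℝ (powerCutoff χ ε : E → ℝ) y‖ ^ 2 ∂μ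
      = ∫ y : E, (deriv χ (‖y‖ ^ ε) * (ε * ‖y‖ ^ (ε - 1))) ^ 2 ∂μ := by
        refine integral_congr_ae ((μ.ae_ne 0).mono fun y hy => ?_)
        simp only [norm_fderiv_powerCutoff hχ hy, sq_abs]
    _ = 2 * (μ.real (Metric.ball 0 1) * ∫ r in Set.Ioi (0 : ℝ),
          r * (deriv χ (r ^ ε) * (ε * r ^ (ε - 1))) ^ 2) := by
        rw [integral_fun_norm_addHaar μ fun r => (deriv χ (r ^ ε) * (ε * r ^ (ε - 1))) ^ 2, hdim]
        simp
    _ = 2 * (μ.real (Metric.ball 0 1) *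
          (ε * ∫ r in Set.Ioi (0 : ℝ), (|ε| * r ^ (ε - 1)) • (r ^ ε * deriv χ (r ^ ε) ^ 2))) := by
        rw [← integral_const_mul ε]
        congr 2
        refine setIntegral_congr_fun measurableSet_Ioi fun r hr => ?_
        have hpow : r * r ^ (ε - 1) = r ^ ε := by
          rw [mul_comm, ← Real.rpow_add_one (ne_of_gt hr), sub_add_cancel]
        simp only [abs_of_pos hε, smul_eq_mul, ← hpow]
        ring_nf
    _ = ε * (2 * (μ.real (Metric.ball 0 1) * ∫ u in Set.Ioi (0 : ℝ), u * deriv χ u ^ 2)) := by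
        rw [integral_comp_rpow_Ioi (fun u => u * deriv χ u ^ 2) hε.ne']
        ring

-- Points have zero capacity in dimension two.
theorem exists_integral_norm_fderiv_sq_lt [MeasurableSpace E] [BorelSpace E]
    [FiniteDimensional ℝ E] {μ : Measure E} [μ.IsAddHaarMeasure]
    (hdim : Module.finrank ℝ E = 2) {w : E → ℝ} (hpos : 0 < ∫ y, w y ∂μ) {δ : ℝ} (hδ : 0 < δ) :
    ∃ η : E → ℝ, ContDiff ℝ ∞ η ∧ HasCompactSupport η ∧ 0 ∉ tsupport η ∧
      ∫ y, ‖fderiv ℝ η y‖ ^ 2 ∂μ < δ * ∫ y, η y ^ 2 * w y ∂μ := by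
  have : Nontrivial E := Module.nontrivial_of_finrank_pos (R := ℝ) (by omega)
  let χ : ContDiffBump (1 : ℝ) := ⟨1 / 4, 1 / 2, by norm_num, by norm_num⟩
  have hχ0 : (0 : ℝ) ∉ tsupport χ := by
    rw [χ.tsupport_eq]
    norm_num [χ, Real.dist_eq]
  have hχ1 : χ 1 = 1 := χ.one_of_mem_closedBall (Metric.mem_closedBall_self χ.rIn_pos.le)
  have henergy : Tendsto (fun ε => ∫ y, ‖fderiv ℝ (powerCutoff χ ε : E → ℝ) y‖ ^ 2 ∂μ)
      (𝓝[>] 0) (𝓝 0) := by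
    refine Tendsto.congr' (eventually_mem_nhdsWithin.mono fun ε hε =>
      (integral_norm_fderiv_powerCutoff_sq μ hdim (χ.contDiff.differentiable one_ne_zero)
        hε).symm) ?_
    exact ((continuous_mul_const _).tendsto' 0 0 (zero_mul _)).mono_left nhdsWithin_le_nhds
  have hw : Integrable w μ := .of_integral_ne_zero hpos.ne'
  have hmass : Tendsto (fun ε => δ * ∫ y, powerCutoff χ ε y ^ 2 * w y ∂μ) (𝓝[>] 0)
      (𝓝 (δ * ∫ y, w y ∂μ)) := by
    simpa [hχ1] using (tendsto_integral_powerCutoff_sq_mul χ.continuous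
      (fun u => (abs_of_nonneg χ.nonneg).trans_le χ.le_one) hw).const_mul δ
  obtain ⟨ε, hlt, hε⟩ := ((henergy.eventually_lt hmass (mul_pos hδ hpos)).and
    eventually_mem_nhdsWithin).exists
  exact ⟨powerCutoff χ ε, contDiff_powerCutoff χ.contDiff hχ0 hε,
    hasCompactSupport_powerCutoff χ.hasCompactSupport hε,
    zero_notMem_tsupport_powerCutoff hχ0 hε, hlt⟩

end Cutoff
section TrialFunction

variable {E : Type*} [NormedAddCommGroup E]

theorem eventually_forall_le_exp_mul_norm {K : Set E} (hK : IsClosed K) (h0 : 0 ∉ K) (R : ℝ) :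
    ∀ᶠ s in atTop, ∀ y ∈ K, R ≤ Real.exp (s / 2) * ‖y‖ := by
  obtain ⟨r, hr, hball⟩ := Metric.isOpen_iff.1 hK.isOpen_compl 0 h0
  have hexp : Tendsto (fun s : ℝ => Real.exp (s / 2) * r) atTop atTop :=
    (Real.tendsto_exp_atTop.comp (tendsto_id.atTop_div_const two_pos)).atTop_mul_const hr
  filter_upwards [hexp.eventually_ge_atTop R] with s hs y hy
  have hry : r ≤ ‖y‖ := not_lt.1 fun h => hball (mem_ball_zero_iff.2 h) hy
  exact hs.trans (by gcongr)

/-- The Gaussian ground state `exp (-|y|² / 8)` of the harmonic oscillator `-Δ + |y|² / 16`. -/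
noncomputable def groundState (y : E) : ℝ :=
  Real.exp (-‖y‖ ^ 2 / 8)

theorem groundState_pos (y : E) : 0 < groundState y :=
  Real.exp_pos _

theorem groundState_le_one (y : E) : groundState y ≤ 1 :=
  Real.exp_le_one_iff.2 (by linarith [sq_nonneg ‖y‖])

variable [InnerProductSpace ℝ E]

theorem contDiff_groundState {n : WithTop ℕ∞} : ContDiff ℝ n (groundState : E → ℝ) :=
  ((contDiff_norm_sq ℝ).neg.div_const 8).exp

theorem fderiv_groundState (y v : E) :
    fderiv ℝ groundState y v = -(inner ℝ y v / 4) * groundState y := by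
  have hexponent : HasFDerivAt (fun y : E => (-8⁻¹ : ℝ) * ‖y‖ ^ 2)
      ((-8⁻¹ : ℝ) • 2 • innerSL ℝ y) y :=
    (hasStrictFDerivAt_norm_sq y).hasFDerivAt.const_mul _
  have hexp : groundState = fun y : E => Real.exp (-8⁻¹ * ‖y‖ ^ 2) :=
    funext fun y => by rw [groundState]; ring_nf
  rw [hexp, hexponent.exp.fderiv]
  simp only [neg_smul, neg_apply, smul_apply, coe_innerSL_apply, nsmul_eq_mul, smul_eq_mul]
  push_cast
  ring

theorem integral_groundState_sq_pos [MeasurableSpace E] [BorelSpace E] [FiniteDimensional ℝ E] :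
    0 < ∫ y : E, groundState y ^ 2 := by
  have hsq : ∀ y : E, groundState y ^ 2 = Real.exp (-4⁻¹ * ‖y‖ ^ 2) := fun y => by
    rw [groundState, ← Real.exp_nat_mul]
    ring_nf
  simp only [hsq, GaussianFourier.integral_rexp_neg_mul_sq_norm (V := E) (b := 4⁻¹) (by norm_num)]
  positivity

variable {B : ℝ² → ℝ} {η : ℝ² → ℝ}

/-- The Gaussian ground state, cut off by `η` and multiplied by the gauge function of `B`. -/
noncomputable def trialFunction (B η : ℝ² → ℝ) (y : ℝ²) : ℂ :=
  (η y * groundState y) • fluxGauge B y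

theorem norm_trialFunction_sq (B η : ℝ² → ℝ) (y : ℝ²) :
    ‖trialFunction B η y‖ ^ 2 = η y ^ 2 * groundState y ^ 2 := by
  rw [trialFunction, norm_smul, norm_fluxGauge, mul_one, Real.norm_eq_abs, sq_abs, mul_pow]

theorem tsupport_trialFunction_subset (B η : ℝ² → ℝ) :
    tsupport (trialFunction B η) ⊆ tsupport η :=
  (tsupport_smul_subset_left _ _).trans tsupport_mul_subset_left

theorem hasCompactSupport_trialFunction (hηc : HasCompactSupport η) :
    HasCompactSupport (trialFunction B η) :=
  hηc.mul_right.smul_right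

theorem contDiff_trialFunction (hB : ContDiff ℝ ∞ B) (hc : HasCompactSupport B) {n : ℤ}
    (hn : ∫ x, B x = 2 * π * n) (hη : ContDiff ℝ ∞ η) (hη0 : 0 ∉ tsupport η) :
    ContDiff ℝ ∞ (trialFunction B η) :=
  contMDiff_iff_contDiff.1 (contMDiff_of_tsupport fun _ hy =>
    ((hη.mul contDiff_groundState).contDiffAt.smul (contDiffAt_fluxGauge hB hc hn
      (ne_of_mem_of_not_mem (tsupport_trialFunction_subset B η hy) hη0))).contMDiffAt)

theorem covDeriv_trialFunction_add_smul (hB : ContDiff ℝ ∞ B) (hc : HasCompactSupport B) {n : ℤ}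
    (hn : ∫ x, B x = 2 * π * n) {R s : ℝ} (hR : ∀ x, R ≤ ‖x‖ → B x = 0) {y : ℝ²} (hy : y ≠ 0)
    (hRy : R ≤ Real.exp (s / 2) * ‖y‖) (hη : DifferentiableAt ℝ η y) (j : Fin 2) :
    covDeriv (scaledPotential (poincareGauge2 B) s j) (EuclideanSpace.single j 1)
        (trialFunction B η) y + (y j / 4) • trialFunction B η y =
      (groundState y * fderiv ℝ η y (EuclideanSpace.single j 1)) • fluxGauge B y := by
  have hg : DifferentiableAt ℝ groundState y := contDiff_groundState.differentiable one_ne_zero y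
  have hgauge : DifferentiableAt ℝ (fluxGauge B) y :=
    (contDiffAt_fluxGauge hB hc hn hy).differentiableAt (by simp)
  have hderiv : fderiv ℝ (fun x => η x * groundState x) y (EuclideanSpace.single j 1) =
      groundState y * fderiv ℝ η y (EuclideanSpace.single j 1) -
        y j / 4 * (η y * groundState y) := by
    rw [fderiv_fun_mul hη hg]
    simp only [add_apply, smul_apply, fderiv_groundState, EuclideanSpace.inner_single_right,
      ringHom_apply, one_mul, smul_eq_mul]
    ring
  unfold trialFunction
  rw [covDeriv_smul _ _ (hη.fun_mul hg) hgauge, covDeriv_fluxGauge_eq_zero hB hc hn hR hy hRy,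
    smul_zero, zero_add, hderiv, smul_smul, ← add_smul, sub_add_cancel]

theorem norm_covDeriv_trialFunction_add_smul_le (hB : ContDiff ℝ ∞ B) (hc : HasCompactSupport B)
    {n : ℤ} (hn : ∫ x, B x = 2 * π * n) {R s : ℝ} (hR : ∀ x, R ≤ ‖x‖ → B x = 0)
    (hη : Differentiable ℝ η) (hη0 : 0 ∉ tsupport η)
    (hηR : ∀ y ∈ tsupport η, R ≤ Real.exp (s / 2) * ‖y‖) (j : Fin 2) (y : ℝ²) :
    ‖covDeriv (scaledPotential (poincareGauge2 B) s j) (EuclideanSpace.single j 1)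
        (trialFunction B η) y + (y j / 4) • trialFunction B η y‖ ≤ ‖fderiv ℝ η y‖ := by
  by_cases hy : y ∈ tsupport η
  · rw [covDeriv_trialFunction_add_smul hB hc hn hR (ne_of_mem_of_not_mem hy hη0) (hηR y hy)
      (hη y), norm_smul, norm_fluxGauge, mul_one, norm_mul,
      Real.norm_of_nonneg (groundState_pos y).le]
    refine (mul_le_of_le_one_left (norm_nonneg _) (groundState_le_one y)).trans ?_
    simpa using (fderiv ℝ η y).le_opNorm (EuclideanSpace.single j 1)
  · have hyψ : y ∉ tsupport (trialFunction B η) := fun h =>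
      hy (tsupport_trialFunction_subset B η h)
    simp [covDeriv, fderiv_of_notMem_tsupport ℝ hyψ, image_eq_zero_of_notMem_tsupport hyψ]

theorem lsForm2_trialFunction_le (hB : ContDiff ℝ ∞ B) (hc : HasCompactSupport B)
    {n : ℤ} (hn : ∫ x, B x = 2 * π * n) {R s : ℝ} (hR : ∀ x, R ≤ ‖x‖ → B x = 0)
    (hη : ContDiff ℝ ∞ η) (hηc : HasCompactSupport η) (hη0 : 0 ∉ tsupport η)
    (hηR : ∀ y ∈ tsupport η, R ≤ Real.exp (s / 2) * ‖y‖) :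
    lsForm2 (poincareGauge2 B) s (trialFunction B η) ≤
      1 / 2 * (∫ y, ‖trialFunction B η y‖ ^ 2) + 2 * ∫ y, ‖fderiv ℝ η y‖ ^ 2 := by
  have hη1 : ContDiff ℝ 1 η := hη.of_le (by simp)
  have hint : Integrable fun y => ‖fderiv ℝ η y‖ ^ 2 :=
    integrable_norm_sq_of_hasCompactSupport (hη1.continuous_fderiv one_ne_zero) (hηc.fderiv ℝ)
  rw [lsForm2_eq_half_add_sum (continuous_poincareGauge2 hB.continuous) s
    ((contDiff_trialFunction hB hc hn hη hη0).of_le (by simp))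
    (hasCompactSupport_trialFunction hηc)]
  gcongr
  refine (Finset.sum_le_card_nsmul _ _ (∫ y, ‖fderiv ℝ η y‖ ^ 2) fun j _ => ?_).trans_eq (by simp)
  exact integral_mono_of_nonneg (.of_forall fun y => by positivity) hint (.of_forall fun y =>
    pow_le_pow_left₀ (norm_nonneg _) (norm_covDeriv_trialFunction_add_smul_le hB hc hn hR
      (hη1.differentiable one_ne_zero) hη0 hηR j y) 2)

theorem exists_eventually_rayleighQuotient_lt (hB : ContDiff ℝ ∞ B) (hc : HasCompactSupport B)
    {n : ℤ} (hn : ∫ x, B x = 2 * π * n) {b : ℝ} (hb : 1 / 2 < b) :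
    ∃ ψ : ℝ² → ℂ, ContDiff ℝ ∞ ψ ∧ HasCompactSupport ψ ∧ ψ ≠ 0 ∧
      ∀ᶠ s in atTop, lsForm2 (poincareGauge2 B) s ψ / (∫ y, ‖ψ y‖ ^ 2) < b := by
  have hδ : 0 < (b - 1 / 2) / 2 := by linarith
  obtain ⟨R, -, hR⟩ := hc.exists_pos_le_norm
  obtain ⟨η, hη, hηc, hη0, hlt⟩ := exists_integral_norm_fderiv_sq_lt (μ := volume) (by simp)
    (integral_groundState_sq_pos (E := ℝ²)) hδ
  simp only [← norm_trialFunction_sq B η] at hlt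
  have hmass : 0 < ∫ y, ‖trialFunction B η y‖ ^ 2 :=
    pos_of_mul_pos_right ((integral_nonneg fun _ => by positivity).trans_lt hlt) hδ.le
  refine ⟨trialFunction B η, contDiff_trialFunction hB hc hn hη hη0,
    hasCompactSupport_trialFunction hηc, fun h => by simp [h] at hmass, ?_⟩
  filter_upwards [eventually_forall_le_exp_mul_norm (isClosed_tsupport η) hη0 R] with s hs
  rw [div_lt_iff₀ hmass]
  linarith [lsForm2_trialFunction_le hB hc hn hR hη hηc hη0 hs]

end TrialFunction

theorem stmt19 (B : EuclideanSpace ℝ (Fin 2) → ℝ)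
    (hBsmooth : ContDiff ℝ (⊤ : ℕ∞) B) (hBsupp : HasCompactSupport B)
    (hflux : ∃ n : ℤ, (1 / (2 * Real.pi)) * (∫ x, B x) = (n : ℝ)) :
    Tendsto (fun s => lambdaB2 (poincareGauge2 B) s) atTop (nhds (1/2 : ℝ)) := by
  obtain ⟨n, hn⟩ := hflux
  have hflux : ∫ x, B x = 2 * π * n := by
    rw [← hn]
    field_simp
  have hA := continuous_poincareGauge2 hBsmooth.continuous
  refine tendsto_order.2 ⟨fun a ha => .of_forall fun s => ha.trans_le (half_le_lambdaB2 hA s),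
    fun b hb => ?_⟩
  obtain ⟨ψ, hψ, hψc, hψ0, hlt⟩ := exists_eventually_rayleighQuotient_lt hBsmooth hBsupp hflux hb
  exact hlt.mono fun s hs => (lambdaB2_le hA s hψ hψc hψ0).trans_lt hs
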